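/- Clausen's formula in the special case a = 1/8, b = 3/8: as formal power series, ₂F₁(1/8, 3/8; 1 | z)² = ₃F₂(1/2, 1/4, 3/4; 1, 1 | z). -/

import Mathlib

/-!
Write `θ = X · d/dX`, a derivation with `coeff n (θ f) = n * coeff n f`. Thus a polynomial in `θ`
acts on coefficients by evaluation at `n`, and a hypergeometric recurrence on coefficients is the
same as a linear differential equation in `θ`.

The series `f = ₂F₁(1/8, 3/8; 1)` satisfies `θ² f = X (θ + 1/8) (θ + 3/8) f`. The Leibniz rule then
shows that `u = f²` satisfies the equation `θ³ u = X (θ + 1/2) (θ + 1/4) (θ + 3/4) u` of the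
`₃F₂` on the right (`euler_ode_sq`); this is the symmetric square of the second-order equation.
Reading off coefficients, `u` obeys the first-order recurrence of the `₃F₂`, and
the constant coefficients are both `1`. All equations are cleared of denominators.
-/

open PowerSeries in
/-- The Euler operator `θ = X · d/dX` on formal power series. -/
noncomputable def eulerOp : Derivation ℚ ℚ⟦X⟧ ℚ⟦X⟧ :=
  (X : ℚ⟦X⟧) • (derivative ℚ)

open PowerSeries in
theorem coeff_eulerOp (f : ℚ⟦X⟧) (n : ℕ) : coeff n (eulerOp f) = n * coeff n f := by
  have h : eulerOp f = X * derivative ℚ f := rfl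
  rw [h]
  cases n with
  | zero => simp
  | succ n =>
    rw [coeff_succ_X_mul, coeff_derivative]
    push_cast
    ring

open PowerSeries in
theorem eulerOp_mul (f g : ℚ⟦X⟧) : eulerOp (f * g) = f * eulerOp g + g * eulerOp f := by
  simp [Derivation.leibniz]

open PowerSeries in
theorem eulerOp_X : eulerOp X = X := by
  have h : eulerOp X = X * derivative ℚ X := rfl
  simp [h]

open PowerSeries in
theorem eulerOp_C_mul (c : ℚ) (f : ℚ⟦X⟧) : eulerOp (C c * f) = C c * eulerOp f := by
  ext n
  simp only [coeff_eulerOp, coeff_C_mul]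
  ring

open PowerSeries in
/-- If `θ² f = X (θ + 1/8) (θ + 3/8) f`, then `u = f²` satisfies
`θ³ u = X (θ + 1/2) (θ + 1/4) (θ + 3/4) u`. -/
theorem euler_ode_sq (f : ℚ⟦X⟧)
    (h : C 64 * eulerOp (eulerOp f) =
      X * (C 64 * eulerOp (eulerOp f) + C 32 * eulerOp f + C 3 * f)) :
    C 32 * eulerOp (eulerOp (eulerOp (f ^ 2))) =
      X * (C 32 * eulerOp (eulerOp (eulerOp (f ^ 2))) + C 48 * eulerOp (eulerOp (f ^ 2)) +
        C 22 * eulerOp (f ^ 2) + C 3 * f ^ 2) := by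
  have h' := congrArg eulerOp h
  simp only [eulerOp_mul X, eulerOp_X, eulerOp_C_mul, map_add] at h'
  have e : ∀ g : ℚ⟦X⟧, eulerOp (g ^ 2) = 2 * (g * eulerOp g) := by
    intro g
    rw [pow_two, eulerOp_mul]
    ring
  have e2 : ∀ g : ℚ⟦X⟧, eulerOp (2 * g) = 2 * eulerOp g := by
    intro g
    simpa only [map_ofNat] using eulerOp_C_mul 2 g
  simp only [e, e2, eulerOp_mul, map_add]
  simp only [map_ofNat] at h h' ⊢
  linear_combination 3 * eulerOp f * h + f * h'

open PowerSeries in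
/-- The `₂F₁` satisfies its hypergeometric differential equation. -/
theorem euler_ode_two_F_one (f : ℚ⟦X⟧)
    (hf : f = PowerSeries.mk fun k =>
      (ascPochhammer ℚ k).eval (1/8 : ℚ) * (ascPochhammer ℚ k).eval (3/8 : ℚ) /
        ((k.factorial : ℚ) * (k.factorial : ℚ))) :
    C 64 * eulerOp (eulerOp f) =
      X * (C 64 * eulerOp (eulerOp f) + C 32 * eulerOp f + C 3 * f) := by
  ext n
  cases n with
  | zero =>
    rw [coeff_zero_X_mul, coeff_C_mul, coeff_eulerOp]
    simp
  | succ n =>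
    have hn : (n.factorial : ℚ) ≠ 0 := by exact_mod_cast n.factorial_ne_zero
    have hn1 : (n : ℚ) + 1 ≠ 0 := by positivity
    simp only [coeff_succ_X_mul, map_add, coeff_C_mul, coeff_eulerOp, hf, coeff_mk,
      ascPochhammer_succ_eval, Nat.factorial_succ]
    push_cast
    field_simp
    ring

open Polynomial PowerSeries in
/-- Clausen's formula with a = 1/8, b = 3/8: as formal power series,
₂F₁(1/8,3/8;1 | z)² = ₃F₂(1/2,1/4,3/4;1,1 | z). -/
theorem clausen_one_eighth_three_eighths :
    (PowerSeries.mk fun k =>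
      (ascPochhammer ℚ k).eval (1/8 : ℚ) * (ascPochhammer ℚ k).eval (3/8 : ℚ) /
        ((k.factorial : ℚ) * (k.factorial : ℚ))) ^ 2 =
    (PowerSeries.mk fun k =>
      (ascPochhammer ℚ k).eval (1/2 : ℚ) * (ascPochhammer ℚ k).eval (1/4 : ℚ) *
        (ascPochhammer ℚ k).eval (3/4 : ℚ) / ((k.factorial : ℚ)) ^ 3) := by
  set f : ℚ⟦X⟧ := PowerSeries.mk fun k =>
      (ascPochhammer ℚ k).eval (1/8 : ℚ) * (ascPochhammer ℚ k).eval (3/8 : ℚ) /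
        ((k.factorial : ℚ) * (k.factorial : ℚ)) with hf
  have h := euler_ode_sq f (euler_ode_two_F_one f hf)
  ext n
  rw [coeff_mk]
  induction n with
  | zero =>
    have h0 : PowerSeries.coeff 0 f = 1 := by simp only [hf, coeff_mk]; simp
    rw [pow_two, PowerSeries.coeff_mul]
    simp [-coeff_zero_eq_constantCoeff, h0]
  | succ n ih =>
    have hn : (n.factorial : ℚ) ≠ 0 := by exact_mod_cast n.factorial_ne_zero
    have hn1 : (n : ℚ) + 1 ≠ 0 := by positivity
    have hc := congrArg (PowerSeries.coeff (n + 1)) h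
    simp only [coeff_succ_X_mul, map_add, PowerSeries.coeff_C_mul, coeff_eulerOp] at hc
    push_cast at hc
    -- `32 n³ + 48 n² + 22 n + 3` factors as `32 (n + 1/2) (n + 1/4) (n + 3/4)`.
    have hr : PowerSeries.coeff (n + 1) (f ^ 2) =
        (n + 1/2) * (n + 1/4) * (n + 3/4) / (n + 1 : ℚ) ^ 3 * PowerSeries.coeff n (f ^ 2) := by
      rw [div_mul_eq_mul_div, eq_div_iff (pow_ne_zero 3 hn1)]
      linear_combination hc / 32
    rw [hr, ih]
    simp only [ascPochhammer_succ_eval, Nat.factorial_succ]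
    push_cast
    field_simp
    ring
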